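/- Let ω₁, ω₂ ∈ ℂ be linearly independent over ℝ and let Λ = ℤω₁ + ℤω₂ ⊆ ℂ. Then the lattice invariants g₂(Λ) = 60·Σ_{ω∈Λ, ω≠0} ω⁻⁴ and g₃(Λ) = 140·Σ_{ω∈Λ, ω≠0} ω⁻⁶ (these series converge absolutely) are both real numbers if and only if Λ is invariant under complex conjugation, i.e. {conj(ω) : ω ∈ Λ} = Λ. -/

import Mathlib

open Filter Topology

namespace Stmt6

/-- Relation for the regular parts near `0`. -/
lemma rel (P Q : PeriodPair) (h2 : P.g₂ = Q.g₂) (h3 : P.g₃ = Q.g₃) (z : ℂ) (hz : z ≠ 0)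
    (hP : z ∉ P.lattice) (hQ : z ∉ Q.lattice) :
    z * (P.derivWeierstrassPExcept 0 z - Q.derivWeierstrassPExcept 0 z) *
      (z ^ 3 * (P.derivWeierstrassPExcept 0 z + Q.derivWeierstrassPExcept 0 z) - 4) =
    (P.weierstrassPExcept 0 z - Q.weierstrassPExcept 0 z) *
      (4 * ((z ^ 2 * P.weierstrassPExcept 0 z + 1) ^ 2 +
        (z ^ 2 * P.weierstrassPExcept 0 z + 1) * (z ^ 2 * Q.weierstrassPExcept 0 z + 1) +
        (z ^ 2 * Q.weierstrassPExcept 0 z + 1) ^ 2) - P.g₂ * z ^ 4) := by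
  have a1 := P.weierstrassPExcept_def 0 z
  have a2 := Q.weierstrassPExcept_def 0 z
  have b1 := P.derivWeierstrassPExcept_def 0 z
  have b2 := Q.derivWeierstrassPExcept_def 0 z
  have c1 := P.derivWeierstrassP_sq z hP
  have c2 := Q.derivWeierstrassP_sq z hQ
  simp only [ZeroMemClass.coe_zero, sub_zero] at a1 a2 b1 b2
  rw [a1, a2, b1, b2]
  rw [← h2, ← h3] at c2
  generalize P.weierstrassP z = u at *
  generalize Q.weierstrassP z = v at *
  generalize P.derivWeierstrassP z = u' at *
  generalize Q.derivWeierstrassP z = v' at *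
  have e1 : z ^ 3 * (u' + 2 / z ^ 3 + (v' + 2 / z ^ 3)) - 4 = z ^ 3 * (u' + v') := by
    field_simp; ring
  have e2 : ∀ w : ℂ, z ^ 2 * (w + (1 / 0 ^ 2 - 1 / z ^ 2)) + 1 = z ^ 2 * w := by
    intro w; field_simp; ring
  rw [e1, e2, e2]
  linear_combination z ^ 4 * (c1 - c2)

lemma ev_notMem (P : PeriodPair) : ∀ᶠ z in 𝓝[≠] (0 : ℂ), z ∉ P.lattice := by
  filter_upwards [mem_nhdsWithin_of_mem_nhds (P.compl_lattice_sdiff_singleton_mem_nhds 0),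
    self_mem_nhdsWithin] with z hz hz0 hzP
  exact hz ⟨hzP, hz0⟩

lemma ev_eq (P Q : PeriodPair) (h2 : P.g₂ = Q.g₂) (h3 : P.g₃ = Q.g₃) :
    ∀ᶠ z in 𝓝 (0 : ℂ), P.weierstrassPExcept 0 z - Q.weierstrassPExcept 0 z = 0 := by
  have hp := P.analyticAt_weierstrassPExcept 0
  have hq := Q.analyticAt_weierstrassPExcept 0
  have hp' := P.analyticAt_derivWeierstrassPExcept 0
  have hq' := Q.analyticAt_derivWeierstrassPExcept 0
  have hd : AnalyticAt ℂ
    (fun z => P.weierstrassPExcept 0 z - Q.weierstrassPExcept 0 z) 0 := hp.sub hq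
  by_contra hne
  obtain ⟨n, h, han, h0, hev⟩ := hd.exists_eventuallyEq_pow_smul_nonzero_iff.2 hne
  simp only [sub_zero, smul_eq_mul] at hev
  have hder : ∀ᶠ z in 𝓝[≠] (0 : ℂ),
      z * (P.derivWeierstrassPExcept 0 z - Q.derivWeierstrassPExcept 0 z) =
        z ^ n * (n * h z + z * deriv h z) := by
    filter_upwards [mem_nhdsWithin_of_mem_nhds hev.eventually_nhds,
      mem_nhdsWithin_of_mem_nhds han.eventually_analyticAt,
      mem_nhdsWithin_of_mem_nhds hp.eventually_analyticAt,
      mem_nhdsWithin_of_mem_nhds hq.eventually_analyticAt,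
      ev_notMem P, ev_notMem Q, self_mem_nhdsWithin] with z hz hhz hpz hqz hP hQ hz0
    have hz0 : z ≠ 0 := hz0
    have e1 := P.eqOn_deriv_weierstrassPExcept_derivWeierstrassPExcept 0
      (x := z) (by simp [hP])
    have e2 := Q.eqOn_deriv_weierstrassPExcept_derivWeierstrassPExcept 0
      (x := z) (by simp [hQ])
    have d1 := hpz.differentiableAt.hasDerivAt.sub hqz.differentiableAt.hasDerivAt
    have d2 := (hasDerivAt_pow n z).mul hhz.differentiableAt.hasDerivAt
    have d3 := (d2.congr_of_eventuallyEq hz).unique d1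
    rw [← e1, ← e2, ← d3]
    rcases n with _ | n
    · simp
    · simp only [Nat.add_sub_cancel, pow_succ]; ring
  have key : ∀ᶠ z in 𝓝[≠] (0 : ℂ), (n * h z + z * deriv h z) *
      (z ^ 3 * (P.derivWeierstrassPExcept 0 z + Q.derivWeierstrassPExcept 0 z) - 4) =
      h z * (4 * ((z ^ 2 * P.weierstrassPExcept 0 z + 1) ^ 2 +
        (z ^ 2 * P.weierstrassPExcept 0 z + 1) * (z ^ 2 * Q.weierstrassPExcept 0 z + 1) +
        (z ^ 2 * Q.weierstrassPExcept 0 z + 1) ^ 2) - P.g₂ * z ^ 4) := by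
    filter_upwards [hder, mem_nhdsWithin_of_mem_nhds hev,
      ev_notMem P, ev_notMem Q, self_mem_nhdsWithin] with z hz hdz hP hQ hz0
    have hr := rel P Q h2 h3 z hz0 hP hQ
    rw [hz, hdz] at hr
    have : z ^ n ≠ 0 := pow_ne_zero _ hz0
    apply mul_left_cancel₀ this
    linear_combination hr
  have ch := han.continuousAt
  have cdh := han.deriv.continuousAt
  have c1 := hp.continuousAt
  have c2 := hq.continuousAt
  have c3 := hp'.continuousAt
  have c4 := hq'.continuousAt
  have key2 := (ContinuousAt.eventuallyEq_nhds_iff_eventuallyEq_nhdsNE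
    (by fun_prop) (by fun_prop)).1 key
  have key3 := key2.self_of_nhds
  simp at key3
  have : (h 0) * ((n : ℂ) + 3) = 0 := by linear_combination (-1 / 4) * key3
  rcases mul_eq_zero.1 this with h' | h'
  · exact h0 h'
  · have : ((n + 3 : ℕ) : ℂ) = 0 := by push_cast; exact h'
    exact absurd (Nat.cast_eq_zero.1 this) (by omega)

lemma le_of_eq (P Q : PeriodPair) (h2 : P.g₂ = Q.g₂) (h3 : P.g₃ = Q.g₃) :
    P.lattice ≤ Q.lattice := by
  have hev : ∀ᶠ z in 𝓝[≠] (0 : ℂ), P.weierstrassP z = Q.weierstrassP z := by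
    filter_upwards [mem_nhdsWithin_of_mem_nhds (ev_eq P Q h2 h3)] with z hz
    have a1 := P.weierstrassPExcept_def 0 z
    have a2 := Q.weierstrassPExcept_def 0 z
    simp only [ZeroMemClass.coe_zero, sub_zero] at a1 a2
    linear_combination hz - a1 + a2
  obtain ⟨z₀, hz₀, hP₀, hQ₀, hz00⟩ := ((eventually_eventually_nhdsWithin.2 hev).and
    ((ev_notMem P).and ((ev_notMem Q).and self_mem_nhdsWithin))).exists
  have hz00 : z₀ ≠ 0 := hz00
  rw [nhdsWithin_eq_nhds.2 (isOpen_compl_singleton.mem_nhds hz00)] at hz₀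
  have hcount : ((P.lattice : Set ℂ) ∪ Q.lattice).Countable :=
    Set.Countable.union (countable_of_Lindelof_of_discrete (X := P.lattice))
      (countable_of_Lindelof_of_discrete (X := Q.lattice))
  have hconn : IsPreconnected ((P.lattice : Set ℂ) ∪ Q.lattice)ᶜ :=
    (hcount.isConnected_compl_of_one_lt_rank (by simp)).isPreconnected
  have heq := AnalyticOnNhd.eqOn_of_preconnected_of_eventuallyEq
    (P.analyticOnNhd_weierstrassP.mono (by simp))
    (Q.analyticOnNhd_weierstrassP.mono (by simp)) hconn (z₀ := z₀) (by simp [hP₀, hQ₀]) hz₀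
  intro l hl
  by_contra hlQ
  have hcongr : P.weierstrassP =ᶠ[𝓝[≠] l] Q.weierstrassP := by
    filter_upwards [mem_nhdsWithin_of_mem_nhds (P.compl_lattice_sdiff_singleton_mem_nhds l),
      mem_nhdsWithin_of_mem_nhds (Q.isClosed_lattice.isOpen_compl.mem_nhds hlQ),
      self_mem_nhdsWithin] with z hz hzQ hzl
    exact heq (by
      rintro (h | h)
      · exact hz ⟨h, hzl⟩
      · exact hzQ h)
  have o1 := P.order_weierstrassP l hl
  rw [meromorphicOrderAt_congr hcongr] at o1
  have o2 := (Q.analyticOnNhd_weierstrassP l hlQ).meromorphicOrderAt_nonneg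
  rw [o1] at o2
  exact absurd o2 (by decide)

/-- The conjugate period pair. -/
noncomputable def conjPair (P : PeriodPair) : PeriodPair where
  ω₁ := (starRingEnd ℂ) P.ω₁
  ω₂ := (starRingEnd ℂ) P.ω₂
  indep := by
    have := P.indep.map' Complex.conjAe.toLinearMap
      (LinearMap.ker_eq_bot.2 Complex.conjAe.injective)
    have e : (Complex.conjAe.toLinearMap : ℂ → ℂ) ∘ ![P.ω₁, P.ω₂] =
        ![(starRingEnd ℂ) P.ω₁, (starRingEnd ℂ) P.ω₂] := by
      ext i
      fin_cases i <;> simp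
    rw [e] at this
    exact this

lemma mem_conjPair (P : PeriodPair) (z : ℂ) :
    z ∈ (conjPair P).lattice ↔ (starRingEnd ℂ) z ∈ P.lattice := by
  simp only [PeriodPair.mem_lattice, conjPair]
  refine exists_congr fun m => exists_congr fun n => ?_
  constructor
  · rintro rfl; simp
  · intro h
    rw [← Complex.conj_conj z, ← h]; simp

lemma G_conjPair (P : PeriodPair) (n : ℕ) : (conjPair P).G n = (starRingEnd ℂ) (P.G n) := by
  rw [PeriodPair.G, PeriodPair.G, Complex.conj_tsum]
  let e : (conjPair P).lattice ≃ P.lattice :=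
    { toFun := fun z => ⟨(starRingEnd ℂ) z, (mem_conjPair P z).1 z.2⟩
      invFun := fun z => ⟨(starRingEnd ℂ) z, (mem_conjPair P _).2 (by simp)⟩
      left_inv := fun z => by simp
      right_inv := fun z => by simp }
  rw [← e.tsum_eq]
  simp [e]

lemma image_iff (P : PeriodPair) :
    (starRingEnd ℂ) '' (P.lattice : Set ℂ) = P.lattice ↔ (conjPair P).lattice = P.lattice := by
  have : (starRingEnd ℂ) '' (P.lattice : Set ℂ) = (conjPair P).lattice := by
    ext z
    simp only [Set.mem_image, SetLike.mem_coe, mem_conjPair]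
    constructor
    · rintro ⟨w, hw, rfl⟩; simpa using hw
    · intro h; exact ⟨_, h, by simp⟩
  rw [this, SetLike.coe_set_eq]

lemma real_iff (P : PeriodPair) :
    (P.g₂.im = 0 ∧ P.g₃.im = 0) ↔ (starRingEnd ℂ) '' (P.lattice : Set ℂ) = P.lattice := by
  have k2 : (conjPair P).g₂ = (starRingEnd ℂ) P.g₂ := by
    rw [PeriodPair.g₂, PeriodPair.g₂, G_conjPair, map_mul, map_ofNat]
  have k3 : (conjPair P).g₃ = (starRingEnd ℂ) P.g₃ := by
    rw [PeriodPair.g₃, PeriodPair.g₃, G_conjPair, map_mul, map_ofNat]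
  rw [image_iff, ← Complex.conj_eq_iff_im, ← Complex.conj_eq_iff_im, ← k2, ← k3]
  constructor
  · rintro ⟨h2, h3⟩
    exact le_antisymm (le_of_eq _ _ h2 h3) (le_of_eq _ _ h2.symm h3.symm)
  · intro h
    have hG : ∀ k, (conjPair P).G k = P.G k := fun k => by
      unfold PeriodPair.G
      rw [h]
    simp only [PeriodPair.g₂, PeriodPair.g₃, hG, and_self]

lemma summ (P : PeriodPair) (k : ℕ) (hk : 2 < k) :
    Summable (fun w : ↥((P.lattice : Set ℂ) \ {0}) => ‖((w : ℂ))⁻¹ ^ k‖) := by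
  have h := (P.hasSum_sumInvPow 0 hk).summable.norm
  have := h.comp_injective (Set.inclusion_injective
    (Set.sdiff_subset : (P.lattice : Set ℂ) \ {0} ⊆ P.lattice))
  refine this.congr fun w => ?_
  simp

lemma tsum_G (P : PeriodPair) (k : ℕ) (hk : k ≠ 0) :
    ∑' w : ↥((P.lattice : Set ℂ) \ {0}), ((w : ℂ))⁻¹ ^ k = P.G k := by
  have h : P.G k = ∑' w : (P.lattice : Set ℂ), ((w : ℂ))⁻¹ ^ k := by
    simp only [PeriodPair.G, inv_pow]; rfl
  rw [h, tsum_subtype ((P.lattice : Set ℂ) \ {0}) (fun w => w⁻¹ ^ k),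
    tsum_subtype (P.lattice : Set ℂ) (fun w => w⁻¹ ^ k)]
  congr 1
  ext w
  by_cases hw : w = 0
  · simp [hw, hk, Set.indicator]
  · by_cases hm : w ∈ (P.lattice : Set ℂ)
    · have hm' : w ∈ (P.lattice : Set ℂ) \ {0} := ⟨hm, hw⟩
      rw [Set.indicator_of_mem hm, Set.indicator_of_mem hm']
    · rw [Set.indicator_of_notMem hm, Set.indicator_of_notMem (fun h => hm h.1)]

end Stmt6

/-- For a lattice `Λ = ℤω₁ + ℤω₂` (with `ω₁, ω₂` linearly independent
over `ℝ`), the series defining `g₂(Λ) = 60·Σ ω⁻⁴` and `g₃(Λ) = 140·Σ ω⁻⁶` over the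
nonzero lattice points converge absolutely, and `g₂(Λ)` and `g₃(Λ)` are both real
iff `Λ` is invariant under complex conjugation. -/
theorem stmt6 (ω₁ ω₂ : ℂ) (hindep : LinearIndependent ℝ ![ω₁, ω₂])
    (L : Set ℂ) (hL : L = {w : ℂ | ∃ m n : ℤ, w = (m : ℂ) * ω₁ + (n : ℂ) * ω₂}) :
    (Summable (fun w : ↥(L \ {0}) => ‖((w : ℂ))⁻¹ ^ 4‖) ∧
     Summable (fun w : ↥(L \ {0}) => ‖((w : ℂ))⁻¹ ^ 6‖)) ∧
    ((((60 : ℂ) * ∑' w : ↥(L \ {0}), ((w : ℂ))⁻¹ ^ 4).im = 0 ∧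
      ((140 : ℂ) * ∑' w : ↥(L \ {0}), ((w : ℂ))⁻¹ ^ 6).im = 0) ↔
      (starRingEnd ℂ) '' L = L) := by
  let P : PeriodPair := ⟨ω₁, ω₂, hindep⟩
  have hLP : L = (P.lattice : Set ℂ) := by
    rw [hL]
    ext z
    simp only [Set.mem_ofPred_eq, SetLike.mem_coe, PeriodPair.mem_lattice, P, eq_comm]
  subst hLP
  refine ⟨⟨Stmt6.summ P 4 (by norm_num), Stmt6.summ P 6 (by norm_num)⟩, ?_⟩
  rw [Stmt6.tsum_G P 4 (by norm_num), Stmt6.tsum_G P 6 (by norm_num)]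
  exact Stmt6.real_iff P
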